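/- Assume Conditions 10, 11 and 12 hold. Then there exist n×n matrices D_{n,θ,j,k,ℓ} (for j,k,ℓ ∈ {1,…,p}, θ ∈ int Θ, n ∈ ℕ) such that the third-order partial derivatives of the cross-validation criterion satisfy ∂³M_n(θ)/∂θ_j∂θ_k∂θ_ℓ = (1/n) y^{(n)⊤} D_{n,θ,j,k,ℓ} y^{(n)}, and there is a constant C_D < ∞ such that for all n ∈ ℕ, max_{j,k,ℓ=1,…,p} sup_{θ∈int Θ} ρ₁(D_{n,θ,j,k,ℓ}) ≤ C_D, where ρ₁ denotes the largest singular value. -/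

import Mathlib

open MeasureTheory ProbabilityTheory Set Matrix

noncomputable section

/-- `ℝ^p` with the Euclidean norm. -/
abbrev Euc (p : ℕ) := EuclideanSpace ℝ (Fin p)

/-- Build a Euclidean vector from a plain function. -/
def toEuc {p : ℕ} (v : Fin p → ℝ) : Euc p := (WithLp.equiv 2 (Fin p → ℝ)).symm v

/-- The standard Gaussian distribution on `ℝ^p`. -/
def stdGaussian (p : ℕ) : Measure (Euc p) :=
  (Measure.pi fun _ : Fin p => gaussianReal 0 1).map (toEuc (p := p))

/-- The `L¹` Wasserstein distance between two distributions on `ℝ^p`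
(dual formulation: supremum over `1`-Lipschitz test functions). -/
def W1 {p : ℕ} (P Q : Measure (Euc p)) : ℝ :=
  sSup { r | ∃ f : Euc p → ℝ, LipschitzWith 1 f ∧
    r = |(∫ x, f x ∂P) - (∫ x, f x ∂Q)| }

/-- Partial derivative in the `i`-th coordinate direction. -/
def pder {p : ℕ} (i : Fin p) (f : Euc p → ℝ) (θ : Euc p) : ℝ :=
  fderiv ℝ f θ (EuclideanSpace.single i 1)

/-- The gradient as a Euclidean vector. -/
def gradVec {p : ℕ} (f : Euc p → ℝ) (θ : Euc p) : Euc p := toEuc fun i => pder i f θ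

/-- The correlation matrix `R_{n,θ}` with entries `k_θ(x_i − x_j)`. -/
def Rmat {d p : ℕ} (x : ℕ → Euc d) (kern : Euc p → Euc d → ℝ) (n : ℕ) (θ : Euc p) :
    Matrix (Fin n) (Fin n) ℝ :=
  Matrix.of fun i j => kern θ (x i - x j)

/-- `diag(M)`: set the off-diagonal entries of `M` to zero. -/
def diagPart {n : ℕ} (A : Matrix (Fin n) (Fin n) ℝ) : Matrix (Fin n) (Fin n) ℝ :=
  Matrix.diagonal A.diag

/-- The leave-one-out cross-validation criterion
`M_n(θ) = (1/n) yᵀ R_{n,θ}⁻¹ diag(R_{n,θ}⁻¹)⁻² R_{n,θ}⁻¹ y`. -/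
def CVcrit {d p : ℕ} (x : ℕ → Euc d) (kern : Euc p → Euc d → ℝ) (n : ℕ)
    (y : Fin n → ℝ) (θ : Euc p) : ℝ :=
  (1 / n) *
    (y ⬝ᵥ ((Rmat x kern n θ)⁻¹ * ((diagPart ((Rmat x kern n θ)⁻¹))⁻¹) ^ 2 *
      (Rmat x kern n θ)⁻¹).mulVec y)

/-- `opBound A C` means that the largest singular value of `A` is at most `C`. -/
def opBound {n : ℕ} (A : Matrix (Fin n) (Fin n) ℝ) (C : ℝ) : Prop :=
  ∀ v : Fin n → ℝ,
    Real.sqrt (∑ i, A.mulVec v i ^ 2) ≤ C * Real.sqrt (∑ i, v i ^ 2)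

/-!
Families of `C^m` functions whose directional derivatives up to order `m` are bounded uniformly
are closed under sums, products and continuous linear maps of bounded norm, and under inversion
as long as the inverses stay bounded, because `∂(F⁻¹) = -F⁻¹ (∂F) F⁻¹`. The correlation matrices
`R` form such a family: since the `x i` are separated and `s > d`, the row and column sums of
`1 / (1 + ‖x i - x j‖ ^ s)` are bounded, by comparison with the integral of `(1 + ‖·‖) ^ (-s)`, and
Schur's test turns this into a bound on spectral norms. A lower bound `c` on the quadratic form
of `R` together with `‖R‖ ≤ K` gives the lower bound `c / K ^ 2` for `R⁻¹`, hence also for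
`diag(R⁻¹)`, so all the inverses in `R⁻¹ diag(R⁻¹)⁻² R⁻¹` are bounded. Finally `A ↦ yᵀ A y` is
linear and so commutes with differentiation in `θ`.
-/

section DirectionalDerivatives

variable {𝕜 E G H ι κ : Type*} [NontriviallyNormedField 𝕜] [NormedAddCommGroup E] [NormedSpace 𝕜 E]
  [NormedAddCommGroup G] [NormedSpace 𝕜 G] [NormedAddCommGroup H] [NormedSpace 𝕜 H]
  {U : Set E} {v : κ → E} {m : ℕ}

variable (𝕜) in
/-- The iterated directional derivative `∂_{v k_r} ⋯ ∂_{v k_1} f` along a list `[k_1, …, k_r]`;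
the head of the list is differentiated first, so that for the standard basis of `ℝ^p` the list
`[j, k, l]` gives `pder l (pder k (pder j f))`. -/
def iteratedDirDeriv (v : κ → E) : List κ → (E → G) → E → G
  | [], f => f
  | k :: ks, f => iteratedDirDeriv v ks fun θ ↦ fderiv 𝕜 f θ (v k)

lemma iteratedDirDeriv_congr (hU : IsOpen U) (ks : List κ) {f g : E → G} (hfg : EqOn f g U) :
    EqOn (iteratedDirDeriv 𝕜 v ks f) (iteratedDirDeriv 𝕜 v ks g) U := by
  induction ks generalizing f g with
  | nil => exact hfg
  | cons k _ ih =>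
    exact ih fun θ hθ ↦ by rw [(hfg.eventuallyEq_of_mem (hU.mem_nhds hθ)).fderiv_eq]

lemma iteratedDirDeriv_clm_apply (hU : IsOpen U) (L : G →L[𝕜] H) (ks : List κ) {f : E → G}
    (hf : ∀ θ ∈ U, ContDiffAt 𝕜 ks.length f θ) :
    EqOn (iteratedDirDeriv 𝕜 v ks fun θ ↦ L (f θ)) (fun θ ↦ L (iteratedDirDeriv 𝕜 v ks f θ)) U := by
  induction ks generalizing f with
  | nil => exact fun _ _ ↦ rfl
  | cons k ks ih =>
    have hfderiv : EqOn (fun θ ↦ fderiv 𝕜 (fun t ↦ L (f t)) θ (v k))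
        (fun θ ↦ L (fderiv 𝕜 f θ (v k))) U := fun θ hθ ↦ by
      have hd := (hf θ hθ).differentiableAt (by simp)
      exact congr($((L.hasFDerivAt.comp θ hd.hasFDerivAt).fderiv) (v k))
    exact (iteratedDirDeriv_congr hU ks hfderiv).trans
      (ih fun θ hθ ↦ (hf θ hθ).fderiv_right_succ.clm_apply contDiffAt_const)

lemma iteratedDirDeriv_add (hU : IsOpen U) (ks : List κ) {f g : E → G}
    (hf : ∀ θ ∈ U, ContDiffAt 𝕜 ks.length f θ) (hg : ∀ θ ∈ U, ContDiffAt 𝕜 ks.length g θ) :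
    EqOn (iteratedDirDeriv 𝕜 v ks fun θ ↦ f θ + g θ)
      (fun θ ↦ iteratedDirDeriv 𝕜 v ks f θ + iteratedDirDeriv 𝕜 v ks g θ) U := by
  induction ks generalizing f g with
  | nil => exact fun _ _ ↦ rfl
  | cons k ks ih =>
    have hfderiv : EqOn (fun θ ↦ fderiv 𝕜 (fun t ↦ f t + g t) θ (v k))
        (fun θ ↦ fderiv 𝕜 f θ (v k) + fderiv 𝕜 g θ (v k)) U := fun θ hθ ↦
      congr($(fderiv_fun_add ((hf θ hθ).differentiableAt (by simp))
        ((hg θ hθ).differentiableAt (by simp))) (v k))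
    exact (iteratedDirDeriv_congr hU ks hfderiv).trans
      (ih (fun θ hθ ↦ (hf θ hθ).fderiv_right_succ.clm_apply contDiffAt_const)
        (fun θ hθ ↦ (hg θ hθ).fderiv_right_succ.clm_apply contDiffAt_const))

variable {A B : ι → Type*}

section NormedSpace

variable [∀ i, NormedAddCommGroup (A i)] [∀ i, NormedSpace 𝕜 (A i)]
  [∀ i, NormedAddCommGroup (B i)] [∀ i, NormedSpace 𝕜 (B i)]

variable (𝕜) in
/-- A family of `C^m` functions on `U` whose directional derivatives of order at most `m`, along
the directions `v`, are bounded on `U` uniformly over the family. The members of the family may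
take values in different spaces, such as matrices of different sizes. -/
structure HasBoundedDirDerivs (U : Set E) (v : κ → E) (m : ℕ) (F : ∀ i, E → A i) : Prop where
  contDiffAt : ∀ i, ∀ θ ∈ U, ContDiffAt 𝕜 m (F i) θ
  exists_norm_le : ∀ ks : List κ, ks.length ≤ m →
    ∃ C, ∀ i, ∀ θ ∈ U, ‖iteratedDirDeriv 𝕜 v ks (F i) θ‖ ≤ C

namespace HasBoundedDirDerivs

variable {F F' : ∀ i, E → A i}

lemma zero_order (hF : ∀ i, ∀ θ ∈ U, ContDiffAt 𝕜 0 (F i) θ)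
    (hC : ∃ C, ∀ i, ∀ θ ∈ U, ‖F i θ‖ ≤ C) : HasBoundedDirDerivs 𝕜 U v 0 F where
  contDiffAt := hF
  exists_norm_le
    | [], _ => hC

lemma succ_order (hF : ∀ i, ∀ θ ∈ U, ContDiffAt 𝕜 (m + 1) (F i) θ)
    (hC : ∃ C, ∀ i, ∀ θ ∈ U, ‖F i θ‖ ≤ C)
    (hF' : ∀ k, HasBoundedDirDerivs 𝕜 U v m fun i θ ↦ fderiv 𝕜 (F i) θ (v k)) :
    HasBoundedDirDerivs 𝕜 U v (m + 1) F where
  contDiffAt := hF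
  exists_norm_le
    | [], _ => hC
    | k :: ks, hks => (hF' k).exists_norm_le ks (Nat.le_of_succ_le_succ hks)

lemma exists_norm_apply_le (hF : HasBoundedDirDerivs 𝕜 U v m F) : ∃ C, ∀ i, ∀ θ ∈ U, ‖F i θ‖ ≤ C :=
  hF.exists_norm_le [] (Nat.zero_le m)

lemma differentiableAt (hF : HasBoundedDirDerivs 𝕜 U v (m + 1) F) (i : ι) {θ : E} (hθ : θ ∈ U) :
    DifferentiableAt 𝕜 (F i) θ :=
  (hF.contDiffAt i θ hθ).differentiableAt (by simp)

lemma of_succ (hF : HasBoundedDirDerivs 𝕜 U v (m + 1) F) : HasBoundedDirDerivs 𝕜 U v m F where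
  contDiffAt i θ hθ := (hF.contDiffAt i θ hθ).of_le (by simp)
  exists_norm_le ks hks := hF.exists_norm_le ks (hks.trans m.le_succ)

lemma fderiv_apply (hF : HasBoundedDirDerivs 𝕜 U v (m + 1) F) (k : κ) :
    HasBoundedDirDerivs 𝕜 U v m fun i θ ↦ fderiv 𝕜 (F i) θ (v k) where
  contDiffAt i θ hθ := (hF.contDiffAt i θ hθ).fderiv_right_succ.clm_apply contDiffAt_const
  exists_norm_le ks hks := hF.exists_norm_le (k :: ks) (Nat.succ_le_succ hks)

lemma congr (hU : IsOpen U) (hF : HasBoundedDirDerivs 𝕜 U v m F)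
    (hFF' : ∀ i, EqOn (F' i) (F i) U) : HasBoundedDirDerivs 𝕜 U v m F' where
  contDiffAt i θ hθ := (hF.contDiffAt i θ hθ).congr_of_eventuallyEq
    ((hFF' i).eventuallyEq_of_mem (hU.mem_nhds hθ))
  exists_norm_le ks hks := by
    obtain ⟨C, hC⟩ := hF.exists_norm_le ks hks
    exact ⟨C, fun i θ hθ ↦ by rw [iteratedDirDeriv_congr hU ks (hFF' i) hθ]; exact hC i θ hθ⟩

lemma exists_forall_norm_le [Finite κ] (hF : HasBoundedDirDerivs 𝕜 U v m F) :
    ∃ C, ∀ i, ∀ θ ∈ U, ∀ ks : List κ, ks.length ≤ m →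
      ‖iteratedDirDeriv 𝕜 v ks (F i) θ‖ ≤ C := by
  choose! C hC using hF.exists_norm_le
  obtain ⟨M, hM⟩ := ((List.finite_length_le κ m).image C).bddAbove
  exact ⟨M, fun i θ hθ ks hks ↦ (hC ks hks i θ hθ).trans (hM ⟨ks, hks, rfl⟩)⟩

lemma add (hU : IsOpen U) (hF : HasBoundedDirDerivs 𝕜 U v m F)
    (hF' : HasBoundedDirDerivs 𝕜 U v m F') :
    HasBoundedDirDerivs 𝕜 U v m fun i θ ↦ F i θ + F' i θ where
  contDiffAt i θ hθ := (hF.contDiffAt i θ hθ).add (hF'.contDiffAt i θ hθ)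
  exists_norm_le ks hks := by
    obtain ⟨C, hC⟩ := hF.exists_norm_le ks hks
    obtain ⟨C', hC'⟩ := hF'.exists_norm_le ks hks
    refine ⟨C + C', fun i θ hθ ↦ ?_⟩
    rw [iteratedDirDeriv_add hU ks
      (fun t ht ↦ (hF.contDiffAt i t ht).of_le (mod_cast hks))
      (fun t ht ↦ (hF'.contDiffAt i t ht).of_le (mod_cast hks)) hθ]
    exact norm_add_le_of_le (hC i θ hθ) (hC' i θ hθ)

lemma clm_apply (hU : IsOpen U) (hF : HasBoundedDirDerivs 𝕜 U v m F) (L : ∀ i, A i →L[𝕜] B i)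
    {K : ℝ} (hL : ∀ i, ‖L i‖ ≤ K) : HasBoundedDirDerivs 𝕜 U v m fun i θ ↦ L i (F i θ) where
  contDiffAt i θ hθ := (L i).contDiff.contDiffAt.comp θ (hF.contDiffAt i θ hθ)
  exists_norm_le ks hks := by
    obtain ⟨C, hC⟩ := hF.exists_norm_le ks hks
    refine ⟨K * C, fun i θ hθ ↦ ?_⟩
    rw [iteratedDirDeriv_clm_apply hU (L i) ks
      (fun t ht ↦ (hF.contDiffAt i t ht).of_le (mod_cast hks)) hθ]
    exact (L i).le_of_opNorm_le_of_le (hL i) (hC i θ hθ)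

end HasBoundedDirDerivs

end NormedSpace

section NormedRing

variable [∀ i, NormedRing (A i)] [∀ i, NormedAlgebra 𝕜 (A i)] {F F' : ∀ i, E → A i}

lemma fderiv_ringInverse_apply {R : Type*} [NormedRing R] [HasSummableGeomSeries R]
    [NormedAlgebra 𝕜 R] {f : E → R} {θ : E} (hf : DifferentiableAt 𝕜 f θ) (hθ : IsUnit (f θ))
    (w : E) :
    fderiv 𝕜 (fun t ↦ Ring.inverse (f t)) θ w =
      -(Ring.inverse (f θ) * fderiv 𝕜 f θ w * Ring.inverse (f θ)) := by
  obtain ⟨u, hu⟩ := hθ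
  have hinv := hasFDerivAt_ringInverse (𝕜 := 𝕜) u
  rw [hu] at hinv
  have hcomp := (hinv.comp θ hf.hasFDerivAt).fderiv
  simpa [← hu, Function.comp_def] using congr($hcomp w)

namespace HasBoundedDirDerivs

lemma exists_norm_mul_le (hF : HasBoundedDirDerivs 𝕜 U v m F)
    (hF' : HasBoundedDirDerivs 𝕜 U v m F') : ∃ C, ∀ i, ∀ θ ∈ U, ‖F i θ * F' i θ‖ ≤ C := by
  obtain ⟨C, hC⟩ := hF.exists_norm_apply_le
  obtain ⟨C', hC'⟩ := hF'.exists_norm_apply_le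
  exact ⟨C * C', fun i θ hθ ↦ norm_mul_le_of_le (hC i θ hθ) (hC' i θ hθ)⟩

lemma mul (hU : IsOpen U) (hF : HasBoundedDirDerivs 𝕜 U v m F)
    (hF' : HasBoundedDirDerivs 𝕜 U v m F') :
    HasBoundedDirDerivs 𝕜 U v m fun i θ ↦ F i θ * F' i θ := by
  induction m generalizing F F' with
  | zero =>
    exact zero_order (fun i θ hθ ↦ (hF.contDiffAt i θ hθ).mul (hF'.contDiffAt i θ hθ))
      (hF.exists_norm_mul_le hF')
  | succ m ih =>
    refine succ_order (fun i θ hθ ↦ (hF.contDiffAt i θ hθ).mul (hF'.contDiffAt i θ hθ))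
      (hF.exists_norm_mul_le hF') fun k ↦ ?_
    refine ((ih hF.of_succ (hF'.fderiv_apply k)).add hU
      (ih (hF.fderiv_apply k) hF'.of_succ)).congr hU fun i θ hθ ↦ ?_
    exact congr($(fderiv_fun_mul' (hF.differentiableAt i hθ) (hF'.differentiableAt i hθ)) (v k))

lemma ringInverse [∀ i, HasSummableGeomSeries (A i)] (hU : IsOpen U)
    (hF : HasBoundedDirDerivs 𝕜 U v m F) (hunit : ∀ i, ∀ θ ∈ U, IsUnit (F i θ))
    (hC : ∃ C, ∀ i, ∀ θ ∈ U, ‖Ring.inverse (F i θ)‖ ≤ C) :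
    HasBoundedDirDerivs 𝕜 U v m fun i θ ↦ Ring.inverse (F i θ) := by
  have hsmooth : ∀ i, ∀ θ ∈ U, ContDiffAt 𝕜 m (fun t ↦ Ring.inverse (F i t)) θ := fun i θ hθ ↦ by
    obtain ⟨u, hu⟩ := hunit i θ hθ
    exact (hu ▸ contDiffAt_ringInverse 𝕜 u).comp θ (hF.contDiffAt i θ hθ)
  induction m with
  | zero => exact zero_order hsmooth hC
  | succ m ih =>
    have hinv := ih hF.of_succ fun i θ hθ ↦ (hsmooth i θ hθ).of_le (by simp)
    refine succ_order hsmooth hC fun k ↦ ?_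
    have hneg i : ‖-ContinuousLinearMap.id 𝕜 (A i)‖ ≤ 1 := by
      simpa using ContinuousLinearMap.norm_id_le
    refine (((hinv.mul hU (hF.fderiv_apply k)).mul hU hinv).clm_apply hU _ hneg).congr hU
      fun i θ hθ ↦ ?_
    exact fderiv_ringInverse_apply (hF.differentiableAt i hθ) (hunit i θ hθ) (v k)

end HasBoundedDirDerivs

end NormedRing

end DirectionalDerivatives

section SpectralNorm

open scoped Matrix.Norms.L2Operator

section RCLike

variable {l n 𝕜 : Type*} [Fintype n] [RCLike 𝕜]

lemma sq_norm_mulVec_apply_le (A : Matrix l n 𝕜) (v : n → 𝕜) (i : l) :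
    ‖(A *ᵥ v) i‖ ^ 2 ≤ (∑ j, ‖A i j‖) * ∑ j, ‖A i j‖ * ‖v j‖ ^ 2 := by
  have hcauchy := Finset.sum_sq_le_sum_mul_sum_of_sq_le_mul Finset.univ
    (r := fun j ↦ ‖A i j‖ * ‖v j‖) (f := fun j ↦ ‖A i j‖) (g := fun j ↦ ‖A i j‖ * ‖v j‖ ^ 2)
    (fun _ _ ↦ by positivity) (fun _ _ ↦ by positivity) (fun _ _ ↦ by linarith)
  refine le_trans (pow_le_pow_left₀ (norm_nonneg _) ?_ 2) hcauchy
  exact norm_sum_le_of_le _ fun j _ ↦ norm_mul_le _ _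

variable [Fintype l] [DecidableEq n]

lemma l2_opNorm_le_of_mulVec (A : Matrix l n 𝕜) {K : ℝ} (hK : 0 ≤ K)
    (h : ∀ v : EuclideanSpace 𝕜 n, ‖WithLp.toLp 2 (A *ᵥ v)‖ ≤ K * ‖v‖) : ‖A‖ ≤ K := by
  rw [l2_opNorm_def]
  exact ContinuousLinearMap.opNorm_le_bound _ hK h

lemma norm_entry_le_l2_opNorm (A : Matrix l n 𝕜) (i : l) (j : n) : ‖A i j‖ ≤ ‖A‖ := by
  have hcol := l2_opNorm_mulVec A (EuclideanSpace.single j 1)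
  rw [PiLp.norm_single, norm_one, mul_one] at hcol
  simpa using (PiLp.norm_apply_le _ i).trans hcol

lemma l2_opNorm_diagonal_diag_le (A : Matrix n n 𝕜) : ‖diagonal A.diag‖ ≤ ‖A‖ := by
  rw [l2_opNorm_diagonal]
  exact (pi_norm_le_iff_of_nonneg (norm_nonneg A)).2 fun i ↦ norm_entry_le_l2_opNorm A i i

/-- **Schur test**. -/
lemma l2_opNorm_le_of_sum_norm_le (A : Matrix l n 𝕜) {R C : ℝ} (hR : 0 ≤ R) (hC : 0 ≤ C)
    (hrow : ∀ i, ∑ j, ‖A i j‖ ≤ R) (hcol : ∀ j, ∑ i, ‖A i j‖ ≤ C) : ‖A‖ ≤ √(R * C) := by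
  refine l2_opNorm_le_of_mulVec A (by positivity) fun v ↦
    (sq_le_sq₀ (by positivity) (by positivity)).1 ?_
  rw [mul_pow, Real.sq_sqrt (by positivity), EuclideanSpace.norm_sq_eq, EuclideanSpace.norm_sq_eq]
  calc ∑ i, ‖(A *ᵥ v) i‖ ^ 2
      ≤ ∑ i, R * ∑ j, ‖A i j‖ * ‖v j‖ ^ 2 := Finset.sum_le_sum fun i _ ↦
        (sq_norm_mulVec_apply_le A v i).trans (by gcongr; exact hrow i)
    _ = R * ∑ j, (∑ i, ‖A i j‖) * ‖v j‖ ^ 2 := by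
        rw [← Finset.mul_sum, Finset.sum_comm]
        simp only [Finset.sum_mul]
    _ ≤ R * ∑ j, C * ‖v j‖ ^ 2 := by gcongr with j; exact hcol j
    _ = R * C * ∑ j, ‖v j‖ ^ 2 := by rw [← Finset.mul_sum, mul_assoc]

end RCLike

lemma opBound_of_l2_opNorm_le {N : ℕ} {A : Matrix (Fin N) (Fin N) ℝ} {C : ℝ} (hA : ‖A‖ ≤ C) :
    opBound A C := fun v ↦ by
  have h := (l2_opNorm_mulVec A (WithLp.toLp 2 v)).trans
    (mul_le_mul_of_nonneg_right hA (norm_nonneg _))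
  simpa [EuclideanSpace.norm_eq] using h

section Coercive

variable {n : Type*} [Fintype n]

/-- The quadratic form of `A` is bounded below by `c`; for symmetric `A` this says that the
smallest eigenvalue of `A` is at least `c`. -/
def IsCoerciveWith (c : ℝ) (A : Matrix n n ℝ) : Prop :=
  ∀ v : n → ℝ, c * ∑ i, v i ^ 2 ≤ v ⬝ᵥ A *ᵥ v

namespace IsCoerciveWith

variable {A : Matrix n n ℝ} {c K : ℝ}

lemma mul_norm_sq_le_inner (hA : IsCoerciveWith c A) (v : EuclideanSpace ℝ n) :
    c * ‖v‖ ^ 2 ≤ inner ℝ (WithLp.toLp 2 (A *ᵥ v)) v := by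
  simpa [EuclideanSpace.norm_sq_eq, EuclideanSpace.inner_eq_star_dotProduct] using hA v

lemma mul_norm_le (hA : IsCoerciveWith c A) (v : EuclideanSpace ℝ n) :
    c * ‖v‖ ≤ ‖WithLp.toLp 2 (A *ᵥ v)‖ := by
  rcases (norm_nonneg v).eq_or_lt with hv | hv
  · simp [← hv]
  · refine le_of_mul_le_mul_right ?_ hv
    calc c * ‖v‖ * ‖v‖ = c * ‖v‖ ^ 2 := by ring
      _ ≤ inner ℝ (WithLp.toLp 2 (A *ᵥ v)) v := hA.mul_norm_sq_le_inner v
      _ ≤ ‖WithLp.toLp 2 (A *ᵥ v)‖ * ‖v‖ := real_inner_le_norm _ _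

lemma le_apply_self (hA : IsCoerciveWith c A) (i : n) : c ≤ A i i := by
  classical
  simpa [Pi.single_apply] using hA (Pi.single i 1)

variable [DecidableEq n]

lemma isUnit (hA : IsCoerciveWith c A) (hc : 0 < c) : IsUnit A := by
  refine mulVec_injective_iff_isUnit.1 <|
    (injective_iff_map_eq_zero A.mulVecLin).2 fun v hv ↦ ?_
  have hle := hA.mul_norm_le (WithLp.toLp 2 v)
  rw [show A *ᵥ v = 0 from hv, WithLp.toLp_zero, norm_zero] at hle
  simpa using nonpos_of_mul_nonpos_right hle hc

lemma mulVec_inv_mulVec (hA : IsCoerciveWith c A) (hc : 0 < c) (v : n → ℝ) :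
    A *ᵥ (A⁻¹ *ᵥ v) = v := by
  rw [mulVec_mulVec, mul_nonsing_inv A ((isUnit_iff_isUnit_det A).1 (hA.isUnit hc)), one_mulVec]

lemma l2_opNorm_inv_le (hA : IsCoerciveWith c A) (hc : 0 < c) : ‖A⁻¹‖ ≤ c⁻¹ := by
  refine l2_opNorm_le_of_mulVec _ (by positivity) fun v ↦ ?_
  have hle := hA.mul_norm_le (WithLp.toLp 2 (A⁻¹ *ᵥ v))
  rw [hA.mulVec_inv_mulVec hc] at hle
  exact (le_inv_mul_iff₀ hc).2 hle

lemma inv (hA : IsCoerciveWith c A) (hc : 0 < c) (hK : 0 < K) (hAK : ‖A‖ ≤ K) :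
    IsCoerciveWith (c / K ^ 2) A⁻¹ := fun v ↦ by
  set w : EuclideanSpace ℝ n := WithLp.toLp 2 (A⁻¹ *ᵥ v)
  have hAw : A *ᵥ w = v := hA.mulVec_inv_mulVec hc v
  have hv : ‖WithLp.toLp 2 v‖ ≤ K * ‖w‖ :=
    hAw ▸ (l2_opNorm_mulVec A w).trans (by gcongr)
  calc c / K ^ 2 * ∑ i, v i ^ 2 = c / K ^ 2 * ‖WithLp.toLp 2 v‖ ^ 2 := by
        simp [EuclideanSpace.norm_sq_eq]
    _ ≤ c / K ^ 2 * (K * ‖w‖) ^ 2 := by gcongr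
    _ = c * ‖w‖ ^ 2 := by field_simp
    _ = c * ∑ i, w i ^ 2 := by simp [EuclideanSpace.norm_sq_eq]
    _ ≤ w ⬝ᵥ A *ᵥ w := hA w
    _ = v ⬝ᵥ A⁻¹ *ᵥ v := by rw [hAw, dotProduct_comm]

lemma diagonal_diag (hA : IsCoerciveWith c A) : IsCoerciveWith c (diagonal A.diag) := fun v ↦ by
  rw [Finset.mul_sum, dotProduct]
  refine Finset.sum_le_sum fun i _ ↦ ?_
  rw [mulVec_diagonal, diag_apply]
  nlinarith [hA.le_apply_self i, sq_nonneg (v i)]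

end IsCoerciveWith

end Coercive

end SpectralNorm

section SeparatedPoints

open Module

lemma one_div_one_add_rpow_le {t s : ℝ} (ht : 0 ≤ t) (hs : 0 ≤ s) :
    1 / (1 + t ^ s) ≤ 2 ^ s * (1 + t) ^ (-s) := by
  have hmax : (1 + t) ^ s ≤ 2 ^ s * (1 + t ^ s) := by
    calc (1 + t) ^ s ≤ (2 * max 1 t) ^ s := by
          gcongr
          linarith [le_max_left 1 t, le_max_right 1 t]
      _ = 2 ^ s * max 1 t ^ s := Real.mul_rpow zero_le_two (by positivity)
      _ ≤ 2 ^ s * (1 + t ^ s) := by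
          gcongr
          rcases max_cases 1 t with ⟨h, -⟩ | ⟨h, -⟩ <;> rw [h]
          · simpa using Real.rpow_nonneg ht s
          · simp
  rw [Real.rpow_neg (by positivity), ← div_eq_mul_inv, div_le_div_iff₀ (by positivity)
    (by positivity), one_mul]
  exact hmax

/-- **Peetre's inequality**. -/
lemma one_add_rpow_neg_le {t u r s : ℝ} (ht : 0 ≤ t) (hu : 0 ≤ u) (hr : 0 ≤ r) (hs : 0 ≤ s)
    (hut : u ≤ t + r) : (1 + t) ^ (-s) ≤ (1 + r) ^ s * (1 + u) ^ (-s) := by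
  have hmul : (1 + u) ^ s ≤ (1 + r) ^ s * (1 + t) ^ s := by
    rw [← Real.mul_rpow (by positivity) (by positivity)]
    gcongr
    nlinarith
  rw [Real.rpow_neg (by positivity), Real.rpow_neg (by positivity), ← div_eq_mul_inv,
    le_div_iff₀ (by positivity), inv_mul_le_iff₀ (by positivity), mul_comm]
  exact hmul

variable {E ι : Type*} [NormedAddCommGroup E] [NormedSpace ℝ E] [FiniteDimensional ℝ E]

/-- Each summand is at most a constant times the mean of `(1 + ‖a - ·‖) ^ (-s)` over the ball
around the corresponding point, and these balls are disjoint. -/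
lemma sum_one_add_norm_sub_rpow_neg_mul_measureReal_ball_le [MeasurableSpace E] [BorelSpace E]
    (μ : Measure E) [μ.IsAddHaarMeasure] {x : ι → E} {r s : ℝ} (hr : 0 ≤ r)
    (hs : (finrank ℝ E : ℝ) < s) (t : Finset ι)
    (hx : (t : Set ι).PairwiseDisjoint fun j ↦ Metric.ball (x j) r) (a : E) :
    (∑ j ∈ t, (1 + ‖a - x j‖) ^ (-s)) * μ.real (Metric.ball 0 r) ≤
      (1 + r) ^ s * ∫ y, (1 + ‖y‖) ^ (-s) ∂μ := by
  have hs0 : 0 ≤ s := (Nat.cast_nonneg _).trans hs.le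
  set w : E → ℝ := fun y ↦ (1 + r) ^ s * (1 + ‖a - y‖) ^ (-s)
  have hw : Integrable w μ :=
    ((integrable_one_add_norm hs).comp_sub_left a).const_mul _
  have hball j : (1 + ‖a - x j‖) ^ (-s) * μ.real (Metric.ball 0 r) ≤
      ∫ y in Metric.ball (x j) r, w y ∂μ := by
    rw [mul_comm, ← Measure.addHaar_real_ball_center μ (x j), ← smul_eq_mul, ← setIntegral_const]
    refine setIntegral_mono_on (integrableOn_const measure_ball_lt_top.ne) hw.integrableOn
      measurableSet_ball fun y hy ↦
        one_add_rpow_neg_le (norm_nonneg _) (norm_nonneg _) hr hs0 ?_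
    calc ‖a - y‖ ≤ ‖a - x j‖ + ‖x j - y‖ := norm_sub_le_norm_sub_add_norm_sub a (x j) y
      _ ≤ ‖a - x j‖ + r := by gcongr; exact (mem_ball_iff_norm'.1 hy).le
  calc (∑ j ∈ t, (1 + ‖a - x j‖) ^ (-s)) * μ.real (Metric.ball 0 r)
      ≤ ∑ j ∈ t, ∫ y in Metric.ball (x j) r, w y ∂μ := by
        rw [Finset.sum_mul]
        exact Finset.sum_le_sum fun j _ ↦ hball j
    _ = ∫ y in ⋃ j ∈ t, Metric.ball (x j) r, w y ∂μ :=
        (integral_biUnion_finset t (fun _ _ ↦ measurableSet_ball) hx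
          fun _ _ ↦ hw.integrableOn).symm
    _ ≤ ∫ y, w y ∂μ :=
        setIntegral_le_integral hw (.of_forall fun y ↦ by positivity)
    _ = (1 + r) ^ s * ∫ y, (1 + ‖y‖) ^ (-s) ∂μ := by
        rw [integral_const_mul, integral_sub_left_eq_self (fun y ↦ (1 + ‖y‖) ^ (-s))]

lemma exists_sum_one_div_one_add_norm_sub_rpow_le {x : ι → E} {c s : ℝ} (hc : 0 < c)
    (hx : Pairwise fun i j ↦ c ≤ ‖x i - x j‖) (hs : (finrank ℝ E : ℝ) < s) :
    ∃ K, 0 ≤ K ∧ ∀ (t : Finset ι) (a : E), ∑ j ∈ t, 1 / (1 + ‖a - x j‖ ^ s) ≤ K := by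
  borelize E
  have hs0 : 0 ≤ s := (Nat.cast_nonneg _).trans hs.le
  set μ : Measure E := Measure.addHaar
  set V := μ.real (Metric.ball 0 (c / 2))
  set I := ∫ y, (1 + ‖y‖) ^ (-s) ∂μ
  have hV : 0 < V :=
    ENNReal.toReal_pos (Metric.measure_ball_pos μ 0 (half_pos hc)).ne' measure_ball_lt_top.ne
  have hdisj : Pairwise fun i j ↦
      Disjoint (Metric.ball (x i) (c / 2)) (Metric.ball (x j) (c / 2)) := fun i j hij ↦
    Metric.ball_disjoint_ball (by rw [dist_eq_norm]; linarith [hx hij])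
  refine ⟨2 ^ s * ((1 + c / 2) ^ s * I / V), by positivity, fun t a ↦ ?_⟩
  calc ∑ j ∈ t, 1 / (1 + ‖a - x j‖ ^ s)
      ≤ ∑ j ∈ t, 2 ^ s * (1 + ‖a - x j‖) ^ (-s) :=
        Finset.sum_le_sum fun j _ ↦ one_div_one_add_rpow_le (norm_nonneg _) hs0
    _ = 2 ^ s * ∑ j ∈ t, (1 + ‖a - x j‖) ^ (-s) := (Finset.mul_sum ..).symm
    _ ≤ 2 ^ s * ((1 + c / 2) ^ s * I / V) := by
        gcongr
        rw [le_div_iff₀ hV]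
        exact sum_one_add_norm_sub_rpow_neg_mul_measureReal_ball_le μ (by positivity) hs t
          (hdisj.set_pairwise _) a

end SeparatedPoints

section MatrixFamilies

open scoped Matrix.Norms.L2Operator

variable {𝕜 E κ l n : Type*} [RCLike 𝕜] [Fintype l] [Fintype n] [DecidableEq n]
  [NormedAddCommGroup E] [NormedSpace 𝕜 E] {U : Set E} {v : κ → E}

lemma contDiffAt_of_entries {k : WithTop ℕ∞} {F : E → Matrix l n 𝕜} {θ : E}
    (hF : ∀ i j, ContDiffAt 𝕜 k (fun t ↦ F t i j) θ) : ContDiffAt 𝕜 k F θ :=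
  (LinearMap.toContinuousLinearMap
    (ofLinearEquiv 𝕜 : (l → n → 𝕜) ≃ₗ[𝕜] Matrix l n 𝕜).toLinearMap).contDiff.contDiffAt.comp θ
      (contDiffAt_pi.2 fun i ↦ contDiffAt_pi.2 fun j ↦ hF i j)

lemma iteratedDirDeriv_matrix_apply (hU : IsOpen U) (ks : List κ) {F : E → Matrix l n 𝕜}
    (hF : ∀ θ ∈ U, ContDiffAt 𝕜 ks.length F θ) (i : l) (j : n) :
    EqOn (fun θ ↦ iteratedDirDeriv 𝕜 v ks F θ i j)
      (iteratedDirDeriv 𝕜 v ks fun θ ↦ F θ i j) U :=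
  (iteratedDirDeriv_clm_apply hU
    (LinearMap.toContinuousLinearMap (entryLinearMap 𝕜 𝕜 i j)) ks hF).symm

lemma HasBoundedDirDerivs.matrix_inv {E ι κ : Type*} [NormedAddCommGroup E] [NormedSpace ℝ E]
    {U : Set E} {v : κ → E} {m : ℕ} {n : ι → Type*} [∀ i, Fintype (n i)] [∀ i, DecidableEq (n i)]
    {F : ∀ i, E → Matrix (n i) (n i) ℝ} (hU : IsOpen U)
    (hF : HasBoundedDirDerivs ℝ U v m F) {c : ℝ} (hc : 0 < c)
    (hcoer : ∀ i, ∀ θ ∈ U, IsCoerciveWith c (F i θ)) :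
    HasBoundedDirDerivs ℝ U v m fun i θ ↦ (F i θ)⁻¹ := by
  simp only [nonsing_inv_eq_ringInverse]
  refine hF.ringInverse hU (fun i θ hθ ↦ (hcoer i θ hθ).isUnit hc) ⟨c⁻¹, fun i θ hθ ↦ ?_⟩
  rw [← nonsing_inv_eq_ringInverse]
  exact (hcoer i θ hθ).l2_opNorm_inv_le hc

end MatrixFamilies

section CrossValidation

open scoped Matrix.Norms.L2Operator

variable {d p : ℕ} {ι κ : Type*} {U : Set (Euc p)} {v : κ → Euc p} {m : ℕ}

lemma exists_l2_opNorm_Rmat_le {x : ℕ → Euc d} {c s : ℝ} (hc : 0 < c)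
    (hx : ∀ i j, i ≠ j → c ≤ ‖x i - x j‖) (hs : d < s) : ∃ K, ∀ (g : Euc p → Euc d → ℝ) C θ,
      (∀ z, |g θ z| ≤ C / (1 + ‖z‖ ^ s)) → ∀ n, ‖Rmat x g n θ‖ ≤ C * K := by
  obtain ⟨K, hK0, hK⟩ := exists_sum_one_div_one_add_norm_sub_rpow_le hc (hx · ·)
    (s := s) (by simpa using hs)
  refine ⟨K, fun g C θ hg n ↦ ?_⟩
  have hC : 0 ≤ C := by
    refine nonneg_of_mul_nonneg_left ((abs_nonneg _).trans (hg 0)) ?_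
    positivity
  have hrow (a : Euc d) : ∑ j : Fin n, C / (1 + ‖a - x j‖ ^ s) ≤ C * K := by
    rw [Fin.sum_univ_eq_sum_range fun j ↦ C / (1 + ‖a - x j‖ ^ s)]
    simpa only [Finset.mul_sum, mul_one_div] using
      mul_le_mul_of_nonneg_left (hK (Finset.range n) a) hC
  have hCK : 0 ≤ C * K := mul_nonneg hC hK0
  rw [← Real.sqrt_mul_self hCK]
  refine l2_opNorm_le_of_sum_norm_le _ hCK hCK (fun i ↦ ?_) fun j ↦ ?_
  · exact (Finset.sum_le_sum fun j _ ↦ hg _).trans (hrow (x i))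
  · refine (Finset.sum_le_sum fun i _ ↦ hg _).trans ?_
    simpa only [norm_sub_rev] using hrow (x j)

lemma hasBoundedDirDerivs_Rmat (hU : IsOpen U) {x : ℕ → Euc d} {c s C : ℝ} (hc : 0 < c)
    (hx : ∀ i j, i ≠ j → c ≤ ‖x i - x j‖) (hs : d < s) {kern : Euc p → Euc d → ℝ}
    (hsmooth : ∀ z, ∀ θ ∈ U, ContDiffAt ℝ m (fun t ↦ kern t z) θ)
    (hdecay : ∀ θ ∈ U, ∀ z, ∀ ks : List κ, ks.length ≤ m →
      |iteratedDirDeriv ℝ v ks (fun t ↦ kern t z) θ| ≤ C / (1 + ‖z‖ ^ s)) :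
    HasBoundedDirDerivs ℝ U v m (Rmat x kern) where
  contDiffAt _ θ hθ := contDiffAt_of_entries fun _ _ ↦ hsmooth _ θ hθ
  exists_norm_le ks hks := by
    obtain ⟨K, hK⟩ := exists_l2_opNorm_Rmat_le (p := p) hc hx hs
    refine ⟨C * K, fun n θ hθ ↦ ?_⟩
    have hderiv : iteratedDirDeriv ℝ v ks (Rmat x kern n) θ =
        Rmat x (fun t z ↦ iteratedDirDeriv ℝ v ks (fun t' ↦ kern t' z) t) n θ := by
      ext i j
      exact iteratedDirDeriv_matrix_apply hU ks (fun t ht ↦ contDiffAt_of_entries fun _ _ ↦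
        (hsmooth _ t ht).of_le (mod_cast hks)) i j hθ
    rw [hderiv]
    exact hK _ C θ (fun z ↦ hdecay θ hθ z ks hks) n

/-- `diagPart` as a continuous linear map, for differentiating through it. -/
def diagPartCLM (N : ℕ) : Matrix (Fin N) (Fin N) ℝ →L[ℝ] Matrix (Fin N) (Fin N) ℝ :=
  LinearMap.toContinuousLinearMap
    (diagonalLinearMap (Fin N) ℝ ℝ ∘ₗ diagLinearMap (Fin N) ℝ ℝ)

lemma norm_diagPartCLM_le (N : ℕ) : ‖diagPartCLM N‖ ≤ 1 :=
  ContinuousLinearMap.opNorm_le_bound _ zero_le_one fun A ↦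
    (l2_opNorm_diagonal_diag_le A).trans_eq (one_mul _).symm

/-- The matrix `R⁻¹ diag(R⁻¹)⁻² R⁻¹` of the quadratic form defining the cross-validation
criterion. -/
def cvMatrix {N : ℕ} (R : Matrix (Fin N) (Fin N) ℝ) : Matrix (Fin N) (Fin N) ℝ :=
  R⁻¹ * (diagPart R⁻¹)⁻¹ ^ 2 * R⁻¹

lemma hasBoundedDirDerivs_cvMatrix {E : Type*} [NormedAddCommGroup E] [NormedSpace ℝ E]
    {U : Set E} {v : κ → E} {N : ι → ℕ}
    {R : ∀ i, E → Matrix (Fin (N i)) (Fin (N i)) ℝ} (hU : IsOpen U)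
    (hR : HasBoundedDirDerivs ℝ U v m R) {c : ℝ} (hc : 0 < c)
    (hcoer : ∀ i, ∀ θ ∈ U, IsCoerciveWith c (R i θ)) :
    HasBoundedDirDerivs ℝ U v m fun i θ ↦ cvMatrix (R i θ) := by
  obtain ⟨K, hK⟩ := hR.exists_norm_apply_le
  have hK0 : 0 < max K 1 := lt_max_of_lt_right one_pos
  have hinv := hR.matrix_inv hU hc hcoer
  have hdiag : HasBoundedDirDerivs ℝ U v m fun i θ ↦ diagPart (R i θ)⁻¹ :=
    hinv.clm_apply hU (fun i ↦ diagPartCLM (N i)) fun i ↦ norm_diagPartCLM_le (N i)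
  have hdiaginv := hdiag.matrix_inv hU (c := c / max K 1 ^ 2) (by positivity) fun i θ hθ ↦
    ((hcoer i θ hθ).inv hc hK0 ((hK i θ hθ).trans (le_max_left K 1))).diagonal_diag
  simpa only [cvMatrix, sq] using (hinv.mul hU (hdiaginv.mul hU hdiaginv)).mul hU hinv

/-- The quadratic form `yᵀ A y` as a continuous linear function of the matrix `A`. -/
def quadFormCLM {N : ℕ} (y : Fin N → ℝ) : Matrix (Fin N) (Fin N) ℝ →L[ℝ] ℝ :=
  LinearMap.toContinuousLinearMap ((dotProductBilin ℝ ℝ y).comp ((mulVecBilin ℝ ℝ).flip y))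

lemma CVcrit_eq_quadFormCLM (x : ℕ → Euc d) (kern : Euc p → Euc d → ℝ) (n : ℕ) (y : Fin n → ℝ) :
    CVcrit x kern n y = fun θ ↦ ((1 / n : ℝ) • quadFormCLM y) (cvMatrix (Rmat x kern n θ)) :=
  rfl

theorem CV_third_derivative_formula_general [Finite κ] (hU : IsOpen U) (v : κ → Euc p) (m : ℕ)
    {x : ℕ → Euc d} {kern : Euc p → Euc d → ℝ} {cx cR s C : ℝ} (hcx : 0 < cx)
    (hmindist : ∀ i j, i ≠ j → cx ≤ ‖x i - x j‖) (hcR : 0 < cR)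
    (hcoer : ∀ n, ∀ θ ∈ U, IsCoerciveWith cR (Rmat x kern n θ))
    (hsmooth : ∀ z, ∀ θ ∈ U, ContDiffAt ℝ m (fun t ↦ kern t z) θ) (hs : d < s)
    (hdecay : ∀ θ ∈ U, ∀ z, ∀ ks : List κ, ks.length ≤ m →
      |iteratedDirDeriv ℝ v ks (fun t ↦ kern t z) θ| ≤ C / (1 + ‖z‖ ^ s)) :
    ∃ D : (n : ℕ) → Euc p → List κ → Matrix (Fin n) (Fin n) ℝ,
      (∀ n, ∀ θ ∈ U, ∀ ks : List κ, ks.length ≤ m → ∀ y,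
        iteratedDirDeriv ℝ v ks (CVcrit x kern n y) θ = (1 / n) * (y ⬝ᵥ D n θ ks *ᵥ y)) ∧
      ∃ CD, ∀ n, ∀ θ ∈ U, ∀ ks : List κ, ks.length ≤ m → opBound (D n θ ks) CD := by
  have hcv : HasBoundedDirDerivs ℝ U v m fun n θ ↦ cvMatrix (Rmat x kern n θ) :=
    hasBoundedDirDerivs_cvMatrix (N := fun n ↦ n) hU
      (hasBoundedDirDerivs_Rmat hU hcx hmindist hs hsmooth hdecay) hcR hcoer
  refine ⟨fun n θ ks ↦ iteratedDirDeriv ℝ v ks (fun t ↦ cvMatrix (Rmat x kern n t)) θ,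
    fun n θ hθ ks hks y ↦ ?_, ?_⟩
  · rw [CVcrit_eq_quadFormCLM]
    exact iteratedDirDeriv_clm_apply hU _ ks
      (fun t ht ↦ (hcv.contDiffAt n t ht).of_le (mod_cast hks)) hθ
  · obtain ⟨CD, hCD⟩ := hcv.exists_forall_norm_le
    exact ⟨CD, fun n θ hθ ks hks ↦ opBound_of_l2_opNorm_le (hCD n θ hθ ks hks)⟩

end CrossValidation

/-- Lemma C.4: the third derivatives of the cross-validation criterion are
quadratic forms with uniformly bounded matrices. -/
theorem CV_third_derivative_formula
    {d p : ℕ} (Θ : Set (Euc p)) (hΘcompact : IsCompact Θ)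
    (x : ℕ → Euc d) (kern : Euc p → Euc d → ℝ)
    -- Condition 10 (minimal distance between observation points)
    (cx : ℝ) (hcx : 0 < cx) (hmindist : ∀ i j : ℕ, i ≠ j → cx ≤ ‖x i - x j‖)
    -- Condition 11 (uniformly positive definite correlation matrices)
    (cR1 : ℝ) (hcR1 : 0 < cR1)
    (heigR : ∀ (n : ℕ), ∀ θ ∈ Θ, ∀ v : Fin n → ℝ,
      cR1 * (∑ i, v i ^ 2) ≤ v ⬝ᵥ (Rmat x kern n θ).mulVec v)
    -- Condition 12 (third-order smoothness in θ and decay of the correlation)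
    (hsmooth : ∀ z : Euc d, ∀ θ ∈ interior Θ, ContDiffAt ℝ 3 (fun θ' => kern θ' z) θ)
    (CR2 cR2 : ℝ) (hCR2 : 0 < CR2) (hcR2 : 0 < cR2)
    (hdecay : ∀ θ ∈ Θ, ∀ z : Euc d,
      |kern θ z| ≤ CR2 / (1 + ‖z‖ ^ ((d : ℝ) + cR2)))
    (hdecay1 : ∀ θ ∈ interior Θ, ∀ (z : Euc d) (j : Fin p),
      |pder j (fun θ' => kern θ' z) θ| ≤ CR2 / (1 + ‖z‖ ^ ((d : ℝ) + cR2)))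
    (hdecay2 : ∀ θ ∈ interior Θ, ∀ (z : Euc d) (j k : Fin p),
      |pder k (pder j fun θ' => kern θ' z) θ| ≤ CR2 / (1 + ‖z‖ ^ ((d : ℝ) + cR2)))
    (hdecay3 : ∀ θ ∈ interior Θ, ∀ (z : Euc d) (j k l : Fin p),
      |pder l (pder k (pder j fun θ' => kern θ' z)) θ|
        ≤ CR2 / (1 + ‖z‖ ^ ((d : ℝ) + cR2)))
    : ∃ Dmat : (n : ℕ) → Euc p → Fin p → Fin p → Fin p → Matrix (Fin n) (Fin n) ℝ,
      (∀ (n : ℕ), ∀ θ ∈ interior Θ, ∀ (j k l : Fin p) (y : Fin n → ℝ),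
        pder l (pder k (pder j (CVcrit x kern n y))) θ
          = (1 / n) * (y ⬝ᵥ (Dmat n θ j k l).mulVec y)) ∧
      ∃ CD : ℝ, ∀ (n : ℕ), ∀ θ ∈ interior Θ, ∀ j k l : Fin p,
        opBound (Dmat n θ j k l) CD := by
  have hdecay' : ∀ θ ∈ interior Θ, ∀ z, ∀ ks : List (Fin p), ks.length ≤ 3 →
      |iteratedDirDeriv ℝ (EuclideanSpace.single · 1) ks (fun t ↦ kern t z) θ|
        ≤ CR2 / (1 + ‖z‖ ^ ((d : ℝ) + cR2))
    | θ, hθ, z, [], _ => hdecay θ (interior_subset hθ) z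
    | θ, hθ, z, [j], _ => hdecay1 θ hθ z j
    | θ, hθ, z, [j, k], _ => hdecay2 θ hθ z j k
    | θ, hθ, z, [j, k, l], _ => hdecay3 θ hθ z j k l
  obtain ⟨D, hD, CD, hCD⟩ := CV_third_derivative_formula_general isOpen_interior
    (fun j ↦ EuclideanSpace.single j 1) 3 hcx hmindist hcR1
    (fun n θ hθ ↦ heigR n θ (interior_subset hθ)) hsmooth (lt_add_of_pos_right _ hcR2) hdecay'
  exact ⟨fun n θ j k l ↦ D n θ [j, k, l], fun n θ hθ j k l ↦ hD n θ hθ [j, k, l] le_rfl,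
    CD, fun n θ hθ j k l ↦ hCD n θ hθ [j, k, l] le_rfl⟩
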